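/- arXiv:1911.02305 — 9 statements merged into one kernel-verified Lean document; each statement's English description precedes it below -/
import Mathlib

section
/- Suppose the real polynomial x^3 + 3x^2 + b x + c factors as (x + y1)(x + y2)(x + y3) with y1, y2, y3 > 0 (i.e., it has three negative real roots). Then 0 < b ≤ 3 and 0 < c ≤ 1. -/
/-!
By Vieta, `3`, `b` and `c` are the elementary symmetric functions of the positive numbers `yᵢ`,
so `b` and `c` are positive. The inequality `3 (uv + vw + wu) ≤ (u + v + w) ^ 2` applied to the
`yᵢ` gives `b ≤ 3`; applied to the products `yᵢ yⱼ` it gives `9 c ≤ b ^ 2 ≤ 9`.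
-/

/-- If `x^3 + 3x^2 + b x + c = (x + y1)(x + y2)(x + y3)` with `y1, y2, y3 > 0`,
then `0 < b ≤ 3` and `0 < c ≤ 1`. -/
theorem cubic_neg_roots_coeff_bounds (b c y₁ y₂ y₃ : ℝ)
    (h₁ : 0 < y₁) (h₂ : 0 < y₂) (h₃ : 0 < y₃)
    (hfac : ∀ x : ℝ, x ^ 3 + 3 * x ^ 2 + b * x + c = (x + y₁) * (x + y₂) * (x + y₃)) :
    0 < b ∧ b ≤ 3 ∧ 0 < c ∧ c ≤ 1 := by
  -- Vieta's formulas, read off from the values of the cubic at `0`, `1` and `-1`.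
  have e0 := hfac 0
  have e1 := hfac 1
  have e2 := hfac (-1)
  have hc : c = y₁ * y₂ * y₃ := by linarith
  have hs : y₁ + y₂ + y₃ = 3 := by linarith
  have hb : b = y₁ * y₂ + y₂ * y₃ + y₃ * y₁ := by linarith
  have hb0 : 0 < b := by rw [hb]; positivity
  have hc0 : 0 < c := by rw [hc]; positivity
  -- The inequality `3 * b ≤ (y₁ + y₂ + y₃) ^ 2`.
  have hb3 : b ≤ 3 := by
    have h9 : (y₁ + y₂ + y₃) ^ 2 = 9 := by rw [hs]; norm_num
    nlinarith [sq_nonneg (y₁ - y₂), sq_nonneg (y₂ - y₃), sq_nonneg (y₃ - y₁)]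
  -- The same inequality for the pairwise products `yᵢ * yⱼ`, whose sum is `b`.
  have hbc : 9 * c ≤ b ^ 2 := by
    have h : 3 * (y₁ + y₂ + y₃) * c ≤ b ^ 2 := by
      rw [hb, hc]
      nlinarith [sq_nonneg (y₁ * y₂ - y₂ * y₃), sq_nonneg (y₂ * y₃ - y₃ * y₁),
        sq_nonneg (y₃ * y₁ - y₁ * y₂)]
    rw [hs] at h
    linarith
  exact ⟨hb0, hb3, hc0, by nlinarith⟩
end

section
/- Suppose the real polynomial x^4 + 4x^3 + a x^2 + b x + c factors as (x + y1)(x + y2)(x + y3)(x + y4) with y1, y2, y3, y4 > 0 (i.e., it has four negative real roots). Then 0 < a ≤ 6, 0 < b ≤ 4 and 0 < c ≤ 1. -/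
/-!
Comparing coefficients identifies `4, a, b, c` with the elementary symmetric polynomials of the
`yᵢ`, whence positivity. For the upper bounds, group the variables in pairs: with `s = y₁ + y₂`,
`t = y₃ + y₄`, `p = y₁ y₂`, `q = y₃ y₄` one has `s + t = 4`, `a = p + q + s t`,
`b = p t + q s`, `c = p q`, and everything follows from `p ≤ s² / 4`, `q ≤ t² / 4`, `s t ≤ 4`.
-/

/-- If `x^4 + 4x^3 + a x^2 + b x + c = (x + y1)(x + y2)(x + y3)(x + y4)` with
`y1, y2, y3, y4 > 0`, then `0 < a ≤ 6`, `0 < b ≤ 4` and `0 < c ≤ 1`. -/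
theorem quartic_neg_roots_coeff_bounds (a b c y₁ y₂ y₃ y₄ : ℝ)
    (h₁ : 0 < y₁) (h₂ : 0 < y₂) (h₃ : 0 < y₃) (h₄ : 0 < y₄)
    (hfac : ∀ x : ℝ,
      x ^ 4 + 4 * x ^ 3 + a * x ^ 2 + b * x + c = (x + y₁) * (x + y₂) * (x + y₃) * (x + y₄)) :
    (0 < a ∧ a ≤ 6) ∧ (0 < b ∧ b ≤ 4) ∧ (0 < c ∧ c ≤ 1) := by
  -- Four evaluation points suffice to recover the coefficients by linear algebra.
  have e0 := hfac 0
  have e1 := hfac 1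
  have e2 := hfac (-1)
  have e3 := hfac 2
  have hsum : (y₁ + y₂) + (y₃ + y₄) = 4 := by linarith
  have ha : a = y₁ * y₂ + y₃ * y₄ + (y₁ + y₂) * (y₃ + y₄) := by linarith
  have hb : b = y₁ * y₂ * (y₃ + y₄) + y₃ * y₄ * (y₁ + y₂) := by linarith
  have hc : c = (y₁ * y₂) * (y₃ * y₄) := by linarith
  have hp : y₁ * y₂ ≤ (y₁ + y₂) ^ 2 / 4 := by linarith [sq_nonneg (y₁ - y₂)]
  have hq : y₃ * y₄ ≤ (y₃ + y₄) ^ 2 / 4 := by linarith [sq_nonneg (y₃ - y₄)]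
  have hp0 : 0 < y₁ * y₂ := by positivity
  have hq0 : 0 < y₃ * y₄ := by positivity
  have hs0 : 0 < y₁ + y₂ := by positivity
  have ht0 : 0 < y₃ + y₄ := by positivity
  clear e0 e1 e2 e3 hfac
  generalize y₁ * y₂ = p at *
  generalize y₃ * y₄ = q at *
  generalize y₁ + y₂ = s at *
  generalize y₃ + y₄ = t at *
  have hsq : (s + t) ^ 2 = 16 := by rw [hsum]; norm_num
  have hst : s * t ≤ 4 := by linarith [sq_nonneg (s - t)]
  have hst0 : 0 < s * t := by positivity
  subst ha hb hc
  refine ⟨⟨by positivity, by linarith⟩, ⟨by positivity, ?_⟩, ⟨by positivity, ?_⟩⟩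
  · calc p * t + q * s ≤ s ^ 2 / 4 * t + t ^ 2 / 4 * s := by gcongr
      _ = s * t * (s + t) / 4 := by ring
      _ ≤ 4 := by rw [hsum]; linarith
  · calc p * q ≤ s ^ 2 / 4 * (t ^ 2 / 4) := by gcongr
      _ = (s * t) ^ 2 / 16 := by ring
      _ ≤ 4 ^ 2 / 16 := by gcongr
      _ = 1 := by norm_num
end

section
/- Let p be a real polynomial whose derivative factors as p'(X) = C·(X − x1)·(X − x2)·…·(X − xn) with C ≠ 0 and x1 < x2 < … < xn, where n ≥ 3. Then the critical values of p alternate: for every i with 1 ≤ i ≤ n − 2, one has (p(x_{i+1}) − p(x_i))·(p(x_{i+2}) − p(x_{i+1})) < 0. In particular, the passport of a Morse polynomial is an alternating permutation. -/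
open Polynomial

/-!
By the mean value theorem, the two differences of consecutive critical values are positive
multiples of `p'(ξ)` and `p'(η)` with `x i < ξ < x (i+1) < η < x (i+2)`. In
`p'(ξ) p'(η) = C² ∏ (ξ - x j) (η - x j)` the only root separating `ξ` from `η` is `x (i+1)`,
so exactly one factor is negative and the others are positive.
-/

lemma exists_eval_sub_eq (p : Polynomial ℝ) {a b : ℝ} (hab : a < b) :
    ∃ ξ, a < ξ ∧ ξ < b ∧ p.eval b - p.eval a = (derivative p).eval ξ * (b - a) := by
  obtain ⟨ξ, hξ, h⟩ := exists_hasDerivAt_eq_slope (fun y => p.eval y)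
    (fun y => (derivative p).eval y) hab p.continuous.continuousOn (fun y _ => p.hasDerivAt y)
  refine ⟨ξ, hξ.1, hξ.2, ?_⟩
  rw [h, div_mul_cancel₀ _ (sub_pos.2 hab).ne']

/-- If the derivative of a real polynomial `p` factors as
`C·(X − x 0)·(X − x 1)·…·(X − x (n-1))` with `C ≠ 0` and `x 0 < x 1 < … < x (n-1)`, `n ≥ 3`,
then consecutive critical values alternate: for every `i` with `i + 2 < n`,
`(p(x (i+1)) − p(x i))·(p(x (i+2)) − p(x (i+1))) < 0`. -/
theorem critical_values_alternate (p : Polynomial ℝ) (n : ℕ) (hn : 3 ≤ n)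
    (C : ℝ) (hC : C ≠ 0) (x : ℕ → ℝ)
    (hmono : ∀ i j : ℕ, i < j → j < n → x i < x j)
    (hder : derivative p =
      Polynomial.C C * ∏ i ∈ Finset.range n, (X - Polynomial.C (x i))) :
    ∀ i : ℕ, i + 2 < n →
      (p.eval (x (i + 1)) - p.eval (x i)) * (p.eval (x (i + 2)) - p.eval (x (i + 1))) < 0 := by
  intro i hi
  have h01 := hmono i (i + 1) (by omega) (by omega)
  have h12 := hmono (i + 1) (i + 2) (by omega) hi
  obtain ⟨ξ, hξ1, hξ2, hξ⟩ := exists_eval_sub_eq p h01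
  obtain ⟨η, hη1, hη2, hη⟩ := exists_eval_sub_eq p h12
  have hev (y : ℝ) : (derivative p).eval y = C * ∏ j ∈ Finset.range n, (y - x j) := by
    simp [hder, eval_prod]
  have hmem : i + 1 ∈ Finset.range n := Finset.mem_range.2 (by omega)
  have hprod : ∏ j ∈ Finset.range n, ((ξ - x j) * (η - x j)) < 0 := by
    rw [← Finset.mul_prod_erase _ _ hmem]
    refine mul_neg_of_neg_of_pos
      (mul_neg_of_neg_of_pos (sub_neg.2 hξ2) (sub_pos.2 hη1)) (Finset.prod_pos fun j hj => ?_)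
    obtain ⟨hne, hjn⟩ := Finset.mem_erase.1 hj
    have hjn := Finset.mem_range.1 hjn
    rcases lt_or_gt_of_ne hne with hlt | hgt
    · have hj : x j ≤ x i := by
        rcases (Nat.lt_succ_iff.1 hlt).eq_or_lt with rfl | h
        · exact le_rfl
        · exact (hmono j i h (by omega)).le
      exact mul_pos (by linarith) (by linarith)
    · have hj : x (i + 2) ≤ x j := by
        rcases (Nat.succ_le_of_lt hgt).eq_or_lt with h | h
        · exact (congrArg x h).le
        · exact (hmono (i + 2) j h hjn).le
      exact mul_pos_of_neg_of_neg (by linarith) (by linarith)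
  have hCC : 0 < C * C := mul_self_pos.2 hC
  have key : (p.eval (x (i + 1)) - p.eval (x i)) * (p.eval (x (i + 2)) - p.eval (x (i + 1))) =
      (C * C * ((x (i + 1) - x i) * (x (i + 2) - x (i + 1)))) *
        ∏ j ∈ Finset.range n, ((ξ - x j) * (η - x j)) := by
    rw [hξ, hη, hev, hev, Finset.prod_mul_distrib]
    ring
  rw [key]
  exact mul_neg_of_pos_of_neg
    (mul_pos hCC (mul_pos (sub_pos.2 h01) (sub_pos.2 h12))) hprod
end

section
/- Let n ≥ 2 be even and let 1 ≤ m ≤ n + 1. Then U(n+1, m) = Σ_{k=m}^{n} D(n, k); that is, the number of up-down permutations of {1,…,n+1} with first entry m equals the sum over k from m to n of the number of down-up permutations of {1,…,n} with first entry k. -/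
/-!
Deleting the first entry `p` of an up-down permutation of `Fin (n + 1)` and standardising the
remaining entries leaves a down-up permutation `τ` of `Fin n`. Conversely, `prependPerm p τ`, with
word `p, p.succAbove (τ 0), p.succAbove (τ 1), …`, is up-down exactly when `τ` is down-up and the new
initial ascent `p < p.succAbove (τ 0)` holds, i.e. `p ≤ τ 0` as natural numbers
(`isUpDown_prependPerm`). Every permutation with first entry `p` arises this way from a unique `τ`
(`exists_prependPerm_eq`, `prependPerm_injective`), so the up-down permutations with first entry `m` are counted by the
down-up permutations of `Fin n` whose first entry is at least `m`; sorting the latter by first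
entry gives the sum.
-/

/-- `σ` (a permutation of `Fin n`, values recorded `0`-based) is down-up:
`σ 0 > σ 1 < σ 2 > σ 3 < …`. -/
def IsDownUp {n : ℕ} (σ : Equiv.Perm (Fin n)) : Prop :=
  ∀ i j : Fin n, (j : ℕ) = (i : ℕ) + 1 →
    (if Even (i : ℕ) then σ j < σ i else σ i < σ j)

/-- `σ` (a permutation of `Fin n`, values recorded `0`-based) is up-down:
`σ 0 < σ 1 > σ 2 < σ 3 > …`. -/
def IsUpDown {n : ℕ} (σ : Equiv.Perm (Fin n)) : Prop :=
  ∀ i j : Fin n, (j : ℕ) = (i : ℕ) + 1 →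
    (if Even (i : ℕ) then σ i < σ j else σ j < σ i)

instance {n : ℕ} : DecidablePred (IsDownUp (n := n)) := fun _ => by
  unfold IsDownUp; infer_instance

instance {n : ℕ} : DecidablePred (IsUpDown (n := n)) := fun _ => by
  unfold IsUpDown; infer_instance

/-- `D n m`: the number of down-up permutations `(a₁, …, aₙ)` of `{1, …, n}`
with first entry `a₁ = m`. -/
def downUpCount (n m : ℕ) : ℕ :=
  (Finset.univ.filter (fun σ : Equiv.Perm (Fin n) =>
    IsDownUp σ ∧ ∀ i : Fin n, (i : ℕ) = 0 → (σ i : ℕ) + 1 = m)).card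

/-- `U n m`: the number of up-down permutations `(a₁, …, aₙ)` of `{1, …, n}`
with first entry `a₁ = m`. -/
def upDownCount (n m : ℕ) : ℕ :=
  (Finset.univ.filter (fun σ : Equiv.Perm (Fin n) =>
    IsUpDown σ ∧ ∀ i : Fin n, (i : ℕ) = 0 → (σ i : ℕ) + 1 = m)).card

/-- The permutation of `Fin (n + 1)` with first entry `p` whose remaining entries are, in order, those
of `τ` relabelled increasingly by the complement of `p`. -/
def prependPerm {n : ℕ} (p : Fin (n + 1)) (τ : Equiv.Perm (Fin n)) : Equiv.Perm (Fin (n + 1)) :=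
  (finSuccEquiv' 0).trans ((Equiv.optionCongr τ).trans (finSuccEquiv' p).symm)

lemma prependPerm_zero {n : ℕ} (p : Fin (n + 1)) (τ : Equiv.Perm (Fin n)) :
    prependPerm p τ 0 = p := by
  simp [prependPerm]

lemma prependPerm_succ {n : ℕ} (p : Fin (n + 1)) (τ : Equiv.Perm (Fin n)) (i : Fin n) :
    prependPerm p τ i.succ = p.succAbove (τ i) := by
  have h : finSuccEquiv' (0 : Fin (n + 1)) i.succ = some i := by
    rw [← Fin.succAbove_zero_apply, finSuccEquiv'_succAbove]
  simp [prependPerm, h]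

lemma prependPerm_injective {n : ℕ} (p : Fin (n + 1)) :
    Function.Injective (prependPerm p) := by
  intro τ τ' h
  ext1 i
  have h' := congrArg (fun σ : Equiv.Perm (Fin (n + 1)) => σ i.succ) h
  simp only [prependPerm_succ] at h'
  exact Fin.succAbove_right_injective h'

lemma exists_prependPerm_eq {n : ℕ} (σ : Equiv.Perm (Fin (n + 1))) :
    ∃ τ, prependPerm (σ 0) τ = σ := by
  have hne : ∀ i : Fin n, ∃ k, (σ 0).succAbove k = σ i.succ := fun i =>
    Fin.exists_succAbove_eq fun h => Fin.succ_ne_zero i (σ.injective h)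
  choose f hf using hne
  have hinj : Function.Injective f := fun i j hij =>
    Fin.succ_injective n (σ.injective (by rw [← hf i, ← hf j, hij]))
  refine ⟨Equiv.ofBijective f (Finite.injective_iff_bijective.mp hinj), ?_⟩
  ext1 i
  refine Fin.cases ?_ (fun i => ?_) i
  · exact prependPerm_zero _ _
  · rw [prependPerm_succ]
    exact hf i

/-- Prepending shifts positions by one, which exchanges the two alternation patterns; the only new
condition is the initial ascent. -/
lemma isUpDown_prependPerm {n : ℕ} (p : Fin (n + 1)) (τ : Equiv.Perm (Fin n)) :
    IsUpDown (prependPerm p τ) ↔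
      IsDownUp τ ∧ ∀ i : Fin n, (i : ℕ) = 0 → (p : ℕ) ≤ (τ i : ℕ) := by
  constructor
  · intro h
    refine ⟨fun i j hij => ?_, fun i hi => ?_⟩
    · have := h i.succ j.succ (by simp [hij])
      simp only [prependPerm_succ, Fin.val_succ, Nat.even_add_one, Fin.succAbove_lt_succAbove_iff]
        at this
      split_ifs at this ⊢ <;> assumption
    · have := h 0 i.succ (by simp [hi])
      simp only [prependPerm_succ, prependPerm_zero, Fin.val_zero, Even.zero, if_true,
        Fin.lt_succAbove_iff_le_castSucc] at this
      exact this
  · rintro ⟨h, h0⟩ i j hij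
    obtain ⟨j, rfl⟩ : ∃ k : Fin n, k.succ = j :=
      Fin.exists_succ_eq.mpr (by rintro rfl; simp at hij)
    revert hij
    refine Fin.cases (fun hij => ?_) (fun i hij => ?_) i
    · simp only [prependPerm_succ, prependPerm_zero, Fin.val_zero, Even.zero, if_true,
        Fin.lt_succAbove_iff_le_castSucc]
      exact h0 j (by simpa using hij)
    · have := h i j (by simpa using hij)
      simp only [prependPerm_succ, Fin.val_succ, Nat.even_add_one, Fin.succAbove_lt_succAbove_iff]
      split_ifs at this ⊢ <;> assumption

/-- Summing the counts over first entries `k ≥ m` counts all down-up permutations whose first entry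
is at least `m`. Positivity of `n` is needed for the first entry to exist. -/
lemma sum_downUpCount {n : ℕ} (hn : 0 < n) (m : ℕ) :
    ∑ k ∈ Finset.Icc m n, downUpCount n k =
      (Finset.univ.filter (fun τ : Equiv.Perm (Fin n) =>
        IsDownUp τ ∧ ∀ i : Fin n, (i : ℕ) = 0 → m ≤ (τ i : ℕ) + 1)).card := by
  have hfirst : ∀ P : Fin n → Prop, (∀ i : Fin n, (i : ℕ) = 0 → P i) ↔ P ⟨0, hn⟩ := fun P =>
    ⟨fun h => h _ rfl, fun h i hi => by rwa [show i = ⟨0, hn⟩ from Fin.ext hi]⟩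
  rw [Finset.card_eq_sum_card_fiberwise (t := Finset.Icc m n)
    (f := fun τ : Equiv.Perm (Fin n) => (τ ⟨0, hn⟩ : ℕ) + 1)]
  · refine Finset.sum_congr rfl fun k hk => ?_
    rw [Finset.mem_Icc] at hk
    unfold downUpCount
    congr 1
    ext τ
    simp only [Finset.mem_filter, Finset.mem_univ, true_and, hfirst]
    constructor
    · rintro ⟨h, h'⟩
      exact ⟨⟨h, by omega⟩, h'⟩
    · rintro ⟨⟨h, -⟩, h'⟩
      exact ⟨h, h'⟩
  · intro τ hτ
    have h := (Finset.mem_filter.mp hτ).2.2 ⟨0, hn⟩ rfl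
    exact Finset.mem_coe.mpr (Finset.mem_Icc.mpr ⟨h, (τ ⟨0, hn⟩).isLt⟩)

/-- For even `n ≥ 2` and `1 ≤ m ≤ n + 1`:
`U(n+1, m) = Σ_{k=m}^{n} D(n, k)`. -/
theorem upDown_succ_eq_sum_downUp (n m : ℕ) (hn : Even n) (hn2 : 2 ≤ n)
    (hm1 : 1 ≤ m) (hm2 : m ≤ n + 1) :
    upDownCount (n + 1) m = ∑ k ∈ Finset.Icc m n, downUpCount n k := by
  rw [sum_downUpCount (by omega) m]
  -- The first entry `m` in the `1`-based convention is the element `m - 1` of `Fin (n + 1)`.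
  obtain ⟨p, hp⟩ : ∃ p : Fin (n + 1), (p : ℕ) + 1 = m :=
    ⟨⟨m - 1, by omega⟩, Nat.sub_add_cancel hm1⟩
  subst hp
  symm
  refine Finset.card_bij (fun τ _ => prependPerm p τ) ?_
    (fun τ _ τ' _ h => prependPerm_injective p h) ?_
  · intro τ hτ
    simp only [Finset.mem_filter, Finset.mem_univ, true_and, add_le_add_iff_right] at hτ ⊢
    refine ⟨(isUpDown_prependPerm p τ).mpr hτ, fun i hi => ?_⟩
    rw [show i = 0 from Fin.ext hi, prependPerm_zero]
  · intro σ hσ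
    simp only [Finset.mem_filter, Finset.mem_univ, true_and] at hσ
    have h0 : σ 0 = p := Fin.ext (Nat.succ_injective (hσ.2 0 rfl))
    obtain ⟨τ, hτ⟩ := exists_prependPerm_eq σ
    rw [h0] at hτ
    refine ⟨τ, ?_, hτ⟩
    simp only [Finset.mem_filter, Finset.mem_univ, true_and, add_le_add_iff_right]
    exact (isUpDown_prependPerm p τ).mp (hτ ▸ hσ.1)
end

section
/- Let n ≥ 1 be odd and let 1 ≤ m ≤ n + 1. Then D(n+1, m) = Σ_{k=1}^{m−1} U(n, k); that is, the number of down-up permutations of {1,…,n+1} with first entry m equals the sum over k from 1 to m − 1 of the number of up-down permutations of {1,…,n} with first entry k. -/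
/-- The permutation `(p, τ' 0, τ' 1, …)` of `Fin (n + 1)`, where `τ' i = p.succAbove (τ i)` is
`τ i` raised by one if it is at least `p`. -/
def prependEntry {n : ℕ} (p : Fin (n + 1)) (τ : Equiv.Perm (Fin n)) :
    Equiv.Perm (Fin (n + 1)) :=
  ((finSuccEquiv' 0).trans τ.optionCongr).trans (finSuccEquiv' p).symm

theorem prependEntry_zero {n : ℕ} (p : Fin (n + 1)) (τ : Equiv.Perm (Fin n)) :
    prependEntry p τ 0 = p := by
  simp [prependEntry]

theorem prependEntry_succ {n : ℕ} (p : Fin (n + 1)) (τ : Equiv.Perm (Fin n)) (i : Fin n) :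
    prependEntry p τ i.succ = p.succAbove (τ i) := by
  rw [← Fin.zero_succAbove]
  simp [prependEntry, -Fin.zero_succAbove, -Fin.succAbove_zero]

theorem prependEntry_injective {n : ℕ} (p : Fin (n + 1)) :
    Function.Injective (prependEntry p) := by
  intro τ τ' h
  ext1 i
  have hi := congrArg (fun σ : Equiv.Perm (Fin (n + 1)) => σ i.succ) h
  simp only [prependEntry_succ] at hi
  exact Fin.succAbove_right_injective hi

theorem exists_prependEntry_eq {n : ℕ} (σ : Equiv.Perm (Fin (n + 1))) :
    ∃ τ, prependEntry (σ 0) τ = σ := by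
  have hne : ∀ i : Fin n, σ i.succ ≠ σ 0 := fun i h => Fin.succ_ne_zero i (σ.injective h)
  choose f hf using fun i => Fin.exists_succAbove_eq (hne i)
  have hinj : Function.Injective f := by
    intro i j h
    have hij : σ i.succ = σ j.succ := by rw [← hf i, ← hf j, h]
    exact Fin.succ_injective n (σ.injective hij)
  refine ⟨Equiv.ofBijective f (Finite.injective_iff_bijective.mp hinj), ?_⟩
  ext1 i
  refine Fin.cases ?_ (fun j => ?_) i
  · rw [prependEntry_zero]
  · rw [prependEntry_succ, Equiv.ofBijective_apply, hf]

/-- The shift of positions exchanges the two alternation patterns; the only further condition is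
the initial descent from `p`. -/
theorem isDownUp_prependEntry_iff {n : ℕ} (p : Fin (n + 2)) (τ : Equiv.Perm (Fin (n + 1))) :
    IsDownUp (prependEntry p τ) ↔ IsUpDown τ ∧ (τ 0 : ℕ) < p := by
  constructor
  · intro h
    refine ⟨fun i j hij => ?_, ?_⟩
    · have h' := h i.succ j.succ (by simp [hij])
      simp only [prependEntry_succ, Fin.succAbove_lt_succAbove_iff, Fin.val_succ,
        Nat.even_add_one] at h'
      by_cases hi : Even (i : ℕ) <;> simpa [hi] using h'
    · have h' := h 0 (Fin.succ 0) (by simp)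
      rw [prependEntry_zero, prependEntry_succ, if_pos (by simp),
        Fin.succAbove_lt_iff_castSucc_lt] at h'
      exact h'
  · rintro ⟨h, h0⟩ i j hij
    obtain ⟨j, rfl⟩ := Fin.exists_succ_eq.mpr (show j ≠ 0 by rintro rfl; simp at hij)
    rcases Fin.eq_zero_or_eq_succ i with rfl | ⟨i, rfl⟩
    · obtain rfl : j = 0 := Fin.ext (by simpa using hij)
      rw [prependEntry_zero, prependEntry_succ, if_pos (by simp),
        Fin.succAbove_lt_iff_castSucc_lt]
      exact h0
    · have h' := h i j (by simpa using hij)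
      simp only [prependEntry_succ, Fin.succAbove_lt_succAbove_iff, Fin.val_succ,
        Nat.even_add_one]
      by_cases hi : Even (i : ℕ) <;> simpa [hi] using h'

theorem forall_val_eq_zero_iff {n : ℕ} (P : Fin (n + 1) → Prop) :
    (∀ i : Fin (n + 1), (i : ℕ) = 0 → P i) ↔ P 0 :=
  ⟨fun h => h 0 rfl, fun h i hi => by rwa [show i = 0 from Fin.ext hi]⟩

/-- For odd `n ≥ 1` and `1 ≤ m ≤ n + 1`:
`D(n+1, m) = Σ_{k=1}^{m−1} U(n, k)`. -/
theorem downUp_succ_eq_sum_upDown (n m : ℕ) (hn : Odd n) (hn1 : 1 ≤ n)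
    (hm1 : 1 ≤ m) (hm2 : m ≤ n + 1) :
    downUpCount (n + 1) m = ∑ k ∈ Finset.Icc 1 (m - 1), upDownCount n k := by
  obtain ⟨n, rfl⟩ : ∃ k, n = k + 1 := ⟨n - 1, by omega⟩
  -- `p` is the first entry `m` in `0`-based form.
  obtain ⟨p, rfl⟩ : ∃ p : Fin (n + 2), m = (p : ℕ) + 1 := ⟨⟨m - 1, by omega⟩, by simp; omega⟩
  have hbij : (Finset.univ.filter fun τ : Equiv.Perm (Fin (n + 1)) =>
        IsUpDown τ ∧ (τ 0 : ℕ) < p).card = downUpCount (n + 1 + 1) (p + 1) := by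
    unfold downUpCount
    refine Finset.card_nbij (prependEntry p) ?_ (prependEntry_injective p).injOn ?_
    · intro τ hτ
      simpa [forall_val_eq_zero_iff, isDownUp_prependEntry_iff, prependEntry_zero] using hτ
    · intro σ hσ
      simp only [forall_val_eq_zero_iff, Finset.coe_filter, Finset.mem_univ, true_and,
        Set.mem_ofPred_eq, Nat.add_right_cancel_iff] at hσ
      obtain ⟨τ, hτ⟩ := exists_prependEntry_eq σ
      rw [show σ 0 = p from Fin.ext hσ.2] at hτ
      refine ⟨τ, ?_, hτ⟩
      rw [← hτ, isDownUp_prependEntry_iff] at hσ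
      simpa using hσ.1
  rw [← hbij, Finset.card_eq_sum_card_fiberwise
    (f := fun τ : Equiv.Perm (Fin (n + 1)) => (τ 0 : ℕ) + 1) (t := Finset.Icc 1 (p + 1 - 1))]
  · refine Finset.sum_congr rfl fun k hk => ?_
    rw [Finset.mem_Icc] at hk
    unfold upDownCount
    rw [Finset.filter_filter]
    congr 1
    refine Finset.filter_congr fun τ _ => ?_
    rw [forall_val_eq_zero_iff]
    constructor
    · rintro ⟨⟨h, _⟩, h0⟩
      exact ⟨h, h0⟩
    · rintro ⟨h, h0⟩
      exact ⟨⟨h, by omega⟩, h0⟩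
  · intro τ hτ
    simp only [Finset.coe_filter, Finset.mem_univ, true_and, Set.mem_ofPred_eq] at hτ
    simp only [Finset.coe_Icc, Set.mem_Icc]
    omega
end

section
/- Let b, c be real numbers, let q(x) = x^3 + 3x^2 + bx + c and let p(x) = x^5 + (15/4)x^4 + (5b/3)x^3 + (5c/2)x^2 (so that p'(x) = 5·x·q(x)). If x1 and x2 are distinct real numbers with q(x1) = 0, q(x2) = 0 and p(x1) = p(x2), then g(b, c) = 0, where g(b, c) = 128b^3 − 1998b^2 − 216c^2 + 1512bc + 3645b − 729c. In other words, g(b, c) ≠ 0 guarantees that the values of p at the roots of q are pairwise different. -/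
/-!
Let `s = x₁ + x₂`, `P = x₁ x₂`. By Vieta the third root of `q` is `-3 - s`, so `b` and `c` are
polynomials in `s` and `P`. Since `p' = 5 x q` vanishes at both `x₁` and `x₂`, the difference
`p(x₁) - p(x₂)` is divisible by `(x₁ - x₂)³`; the cofactor is a multiple of `8 s² + 15 s - 2 P`.
Hence `P = 4 s² + 15 s / 2`, so `b` and `c` are polynomials in `s` alone, and along this curve
`g(b, c)` vanishes identically.
-/

/-- Let `q(x) = x³ + 3x² + bx + c` and `p(x) = x⁵ + (15/4)x⁴ + (5b/3)x³ + (5c/2)x²`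
(so `p' = 5·x·q`). If two distinct real roots `x₁ ≠ x₂` of `q` satisfy `p(x₁) = p(x₂)`,
then `g(b,c) = 128b³ − 1998b² − 216c² + 1512bc + 3645b − 729c = 0`: the nonvanishing of
`g` guarantees that the values of `p` at the roots of `q` are pairwise different. -/
theorem deg5_equal_critical_values_imp_g_zero (b c x₁ x₂ : ℝ) (hne : x₁ ≠ x₂)
    (hq₁ : x₁ ^ 3 + 3 * x₁ ^ 2 + b * x₁ + c = 0)
    (hq₂ : x₂ ^ 3 + 3 * x₂ ^ 2 + b * x₂ + c = 0)
    (hp : x₁ ^ 5 + 15 / 4 * x₁ ^ 4 + 5 * b / 3 * x₁ ^ 3 + 5 * c / 2 * x₁ ^ 2 =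
      x₂ ^ 5 + 15 / 4 * x₂ ^ 4 + 5 * b / 3 * x₂ ^ 3 + 5 * c / 2 * x₂ ^ 2) :
    128 * b ^ 3 - 1998 * b ^ 2 - 216 * c ^ 2 + 1512 * b * c + 3645 * b - 729 * c = 0 := by
  have hd : x₁ - x₂ ≠ 0 := sub_ne_zero.mpr hne
  -- Vieta, from the divided difference of `q`
  have hb : b = x₁ * x₂ - (x₁ + x₂) * (3 + (x₁ + x₂)) := by
    apply mul_left_cancel₀ hd
    linear_combination hq₁ - hq₂
  have hc : c = x₁ * x₂ * (3 + (x₁ + x₂)) := by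
    rw [hb] at hq₁
    linear_combination hq₁
  have hP : x₁ * x₂ = 4 * (x₁ + x₂) ^ 2 + 15 / 2 * (x₁ + x₂) := by
    apply mul_left_cancel₀ (pow_ne_zero 3 hd)
    rw [hb, hc] at hp
    linear_combination 6 * hp
  rw [hP] at hb hc
  rw [hb, hc]
  ring
end

section
/- Let b, c be real numbers, let q(x) = x^3 + 3x^2 + bx + c and let p(x) = x^5 + (15/4)x^4 + (5b/3)x^3 + (5c/2)x^2 (so that p'(x) = 5·x·q(x)). If x0 is a nonzero real number with q(x0) = 0 and p(x0) = 0, then h(b, c) = 0, where h(b, c) = 640b^3 − 1350b^2 + 5832c^2 − 9720bc + 18225c. In other words, h(b, c) ≠ 0 guarantees that the values of p at the roots of q are nonzero (i.e., different from the critical value p(0) = 0). -/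
/-!
Dividing `p(x₀) = 0` by `x₀²` and eliminating `c` with `q(x₀) = 0` leaves an equation divisible
by `x₀` and linear in `b`. Hence `b = -(9/5)x₀² - (9/2)x₀` and `c = (4/5)x₀³ + (3/2)x₀²`, a
rational parametrization of the curve `h = 0`.
-/

/-- Let `q(x) = x³ + 3x² + bx + c` and `p(x) = x⁵ + (15/4)x⁴ + (5b/3)x³ + (5c/2)x²`
(so `p' = 5·x·q`). If a nonzero real root `x₀` of `q` satisfies `p(x₀) = 0`, then
`h(b,c) = 640b³ − 1350b² + 5832c² − 9720bc + 18225c = 0`: the nonvanishing of `h`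
guarantees that the values of `p` at the roots of `q` are nonzero. -/
theorem deg5_zero_critical_value_imp_h_zero (b c x₀ : ℝ) (hx₀ : x₀ ≠ 0)
    (hq : x₀ ^ 3 + 3 * x₀ ^ 2 + b * x₀ + c = 0)
    (hp : x₀ ^ 5 + 15 / 4 * x₀ ^ 4 + 5 * b / 3 * x₀ ^ 3 + 5 * c / 2 * x₀ ^ 2 = 0) :
    640 * b ^ 3 - 1350 * b ^ 2 + 5832 * c ^ 2 - 9720 * b * c + 18225 * c = 0 := by
  have hb : b = -(9 / 5) * x₀ ^ 2 - 9 / 2 * x₀ := by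
    -- `x₀³ * (b + (9/5)x₀² + (9/2)x₀)` is the combination `3x₀² * q(x₀) - (6/5) * p(x₀)`.
    have h : x₀ ^ 3 * (b - (-(9 / 5) * x₀ ^ 2 - 9 / 2 * x₀)) = 0 := by
      linear_combination 3 * x₀ ^ 2 * hq - 6 / 5 * hp
    exact sub_eq_zero.mp ((mul_eq_zero.mp h).resolve_left (pow_ne_zero 3 hx₀))
  have hc : c = 4 / 5 * x₀ ^ 3 + 3 / 2 * x₀ ^ 2 := by
    linear_combination hq - x₀ * hb
  rw [hb, hc]
  ring
end

section
/- Let a, b, c be real numbers, let q(x) = x^4 + 4x^3 + ax^2 + bx + c and let P(x) = (1/6)x^6 + (4/5)x^5 + (a/4)x^4 + (b/3)x^3 + (c/2)x^2 (so that P'(x) = x·q(x)). If x1 and x2 are distinct real numbers with q(x1) = 0, q(x2) = 0 and P(x1) = P(x2), then s(a, b, c) = 0, where s(a,b,c) = 37500a^7b − 15625a^6b^2 − 688000a^6b − 90000a^6c − 480000a^5b^2 − 450000a^5bc + 3624960a^5b + 1651200a^5c + 600000a^4b^3 + 187500a^4b^2c + 13363200a^4b^2 + 13824000a^4bc − 5898240a^4b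 + 1080000a^4c^2 − 8699904a^4c − 125000a^3b^4 − 9344000a^3b^3 − 8160000a^3b^2c − 73662464a^3b^2 + 1800000a^3bc^2 − 163184640a^3bc − 28416000a^3c^2 + 14155776a^3c + 1440000a^2b^4 + 1200000a^2b^3c + 3932160a^2b^3 − 750000a^2b^2c^2 + 126259200a^2b^2c + 116391936a^2b^2 − 24576000a^2bc^2 + 723517440a^2bc − 4320000a^2c^3 + 299630592a^2c^2 + 19046400ab^4 − 46080000ab^3c + 154140672ab^3 + 23040000ab^2c^2 − 438829056ab^2c − 2400000abc^3 − 47185920abc^2 − 1056964608abc + 70656000ac^3 − 1264582656ac^2 − 4096000b^5 + 7680000b^4c − 66322432b^4 − 4800000b^3c^2 + 96337920b^3c + 1000000b^2c^3 − 8601600b^2c^2 + 276824064b^2c − 23552000bc^3 + 421527552bc^2 − 203423744c^3 − 268435456b^3 + 1811939328c^2 + 5760000c^4. In other words, s(a, b, c) ≠ 0 guarantees that the values of P at the roots of q are pairwise different. -/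
/-!
Let `f = (x - x₁)(x - x₂) = x² - u x + v`. As `f` divides `q`, one has
`q = f · (x² + (u + 4) x + w)` for some `w`. The coordinates `p = u + 2`, `S = v + w`,
`D = v - w` make swapping the two quadratic factors the sign change `(p, D) ↦ (-p, -D)`, and
`a = S - p² + 4`, `b = p D + 2 S`, `c = (S² - D²) / 4`.

Since `f` divides `P' = x q`, the difference `P(x₁) - P(x₂)` equals `(x₂ - x₁)³ / 60` times the
polynomial `L(p, S, D)` of `pairFactor`, so that `L(p, S, D) = 0`.
Up to a constant, `s` is the product of the analogues of `L` over all six pairs of roots of `q`.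
Grouping these pairs as `{x₁, x₂}`, `{x₃, x₄}` and the four mixed ones gives the factorization
`s = L(p, S, D) · L(-p, S, -D) · N(p, S, D)`, a polynomial identity with `N` as in `mixedFactor`.
-/

/-- The factor of `P(x₁) - P(x₂)` left after removing `(x₂ - x₁)³ / 60`, where
`q = (x² - (p - 2) x + v) (x² + (p + 2) x + w)`, the roots of the first factor are `x₁, x₂`, and
`S = v + w`, `D = v - w`. -/
def pairFactor (p S D : ℝ) : ℝ :=
  5 * (p - 2) ^ 3 + 12 * (p - 2) ^ 2 - 5 * (p - 2) * D - 4 * (S + D)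

/-- Up to a constant, the product of the pair factors of the four pairs consisting of one root of
each of the two quadratic factors of `q`. -/
def mixedFactor (p S D : ℝ) : ℝ :=
  1500 * p ^ 9 * D + 3000 * p ^ 8 * S + 625 * p ^ 8 * D ^ 2 - 8000 * p ^ 7 * S * D
    - 2240 * p ^ 7 * D - 17600 * p ^ 6 * S ^ 2 - 3750 * p ^ 6 * S * D ^ 2 - 4480 * p ^ 6 * S
    - 22800 * p ^ 6 * D ^ 2 + 12000 * p ^ 5 * S ^ 2 * D - 92160 * p ^ 5 * S * D
    - 15000 * p ^ 5 * D ^ 3 - 55680 * p ^ 5 * D + 33600 * p ^ 4 * S ^ 3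
    + 7500 * p ^ 4 * S ^ 2 * D ^ 2 - 94464 * p ^ 4 * S ^ 2 - 18600 * p ^ 4 * S * D ^ 2
    - 111360 * p ^ 4 * S - 2500 * p ^ 4 * D ^ 4 - 216480 * p ^ 4 * D ^ 2
    + 103680 * p ^ 3 * S ^ 2 * D + 16000 * p ^ 3 * S * D ^ 3 - 623616 * p ^ 3 * S * D
    - 183360 * p ^ 3 * D ^ 3 + 168960 * p ^ 3 * D - 19200 * p ^ 2 * S ^ 4
    - 5000 * p ^ 2 * S ^ 3 * D ^ 2 + 161280 * p ^ 2 * S ^ 3 + 84000 * p ^ 2 * S ^ 2 * D ^ 2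
    - 414720 * p ^ 2 * S ^ 2 + 3750 * p ^ 2 * S * D ^ 4 - 468384 * p ^ 2 * S * D ^ 2
    + 337920 * p ^ 2 * S - 64800 * p ^ 2 * D ^ 4 + 143104 * p ^ 2 * D ^ 2
    - 8000 * p * S ^ 4 * D + 97280 * p * S ^ 3 * D + 12000 * p * S ^ 2 * D ^ 3
    - 299520 * p * S ^ 2 * D - 126720 * p * S * D ^ 3 + 286720 * p * S * D - 10500 * p * D ^ 5
    + 39552 * p * D ^ 3 - 25600 * p * D - 3200 * S ^ 5 + 25600 * S ^ 4 + 12000 * S ^ 3 * D ^ 2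
    - 76800 * S ^ 3 - 48960 * S ^ 2 * D ^ 2 + 102400 * S ^ 2 - 12000 * S * D ^ 4
    + 51840 * S * D ^ 2 - 51200 * S - 625 * D ^ 6 + 3264 * D ^ 4 - 3840 * D ^ 2

/-- Let `q(x) = x⁴ + 4x³ + ax² + bx + c` and
`P(x) = (1/6)x⁶ + (4/5)x⁵ + (a/4)x⁴ + (b/3)x³ + (c/2)x²` (so `P' = x·q`).
If two distinct real roots `x₁ ≠ x₂` of `q` satisfy `P(x₁) = P(x₂)`, then `s(a,b,c) = 0`:
the nonvanishing of `s` guarantees that the values of `P` at the roots of `q`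
are pairwise different. -/
theorem deg6_equal_critical_values_imp_s_zero (a b c x₁ x₂ : ℝ) (hne : x₁ ≠ x₂)
    (hq₁ : x₁ ^ 4 + 4 * x₁ ^ 3 + a * x₁ ^ 2 + b * x₁ + c = 0)
    (hq₂ : x₂ ^ 4 + 4 * x₂ ^ 3 + a * x₂ ^ 2 + b * x₂ + c = 0)
    (hP : 1 / 6 * x₁ ^ 6 + 4 / 5 * x₁ ^ 5 + a / 4 * x₁ ^ 4 + b / 3 * x₁ ^ 3 + c / 2 * x₁ ^ 2 =
      1 / 6 * x₂ ^ 6 + 4 / 5 * x₂ ^ 5 + a / 4 * x₂ ^ 4 + b / 3 * x₂ ^ 3 + c / 2 * x₂ ^ 2) :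
    37500 * a ^ 7 * b - 15625 * a ^ 6 * b ^ 2 - 688000 * a ^ 6 * b - 90000 * a ^ 6 * c
      - 480000 * a ^ 5 * b ^ 2 - 450000 * a ^ 5 * b * c + 3624960 * a ^ 5 * b
      + 1651200 * a ^ 5 * c + 600000 * a ^ 4 * b ^ 3 + 187500 * a ^ 4 * b ^ 2 * c
      + 13363200 * a ^ 4 * b ^ 2 + 13824000 * a ^ 4 * b * c - 5898240 * a ^ 4 * b
      + 1080000 * a ^ 4 * c ^ 2 - 8699904 * a ^ 4 * c - 125000 * a ^ 3 * b ^ 4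
      - 9344000 * a ^ 3 * b ^ 3 - 8160000 * a ^ 3 * b ^ 2 * c - 73662464 * a ^ 3 * b ^ 2
      + 1800000 * a ^ 3 * b * c ^ 2 - 163184640 * a ^ 3 * b * c - 28416000 * a ^ 3 * c ^ 2
      + 14155776 * a ^ 3 * c + 1440000 * a ^ 2 * b ^ 4 + 1200000 * a ^ 2 * b ^ 3 * c
      + 3932160 * a ^ 2 * b ^ 3 - 750000 * a ^ 2 * b ^ 2 * c ^ 2
      + 126259200 * a ^ 2 * b ^ 2 * c + 116391936 * a ^ 2 * b ^ 2
      - 24576000 * a ^ 2 * b * c ^ 2 + 723517440 * a ^ 2 * b * c - 4320000 * a ^ 2 * c ^ 3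
      + 299630592 * a ^ 2 * c ^ 2 + 19046400 * a * b ^ 4 - 46080000 * a * b ^ 3 * c
      + 154140672 * a * b ^ 3 + 23040000 * a * b ^ 2 * c ^ 2 - 438829056 * a * b ^ 2 * c
      - 2400000 * a * b * c ^ 3 - 47185920 * a * b * c ^ 2 - 1056964608 * a * b * c
      + 70656000 * a * c ^ 3 - 1264582656 * a * c ^ 2 - 4096000 * b ^ 5
      + 7680000 * b ^ 4 * c - 66322432 * b ^ 4 - 4800000 * b ^ 3 * c ^ 2
      + 96337920 * b ^ 3 * c + 1000000 * b ^ 2 * c ^ 3 - 8601600 * b ^ 2 * c ^ 2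
      + 276824064 * b ^ 2 * c - 23552000 * b * c ^ 3 + 421527552 * b * c ^ 2
      - 203423744 * c ^ 3 - 268435456 * b ^ 3 + 1811939328 * c ^ 2 + 5760000 * c ^ 4
      = 0 := by
  -- `q` is divisible by `(x - x₁)(x - x₂)`; `w` is the constant term of the quotient.
  obtain ⟨w, hw⟩ : ∃ w, w = a - x₁ * x₂ + (x₁ + x₂) * (x₁ + x₂ + 4) := ⟨_, rfl⟩
  have hd : x₁ - x₂ ≠ 0 := sub_ne_zero.2 hne
  have hb : b = x₁ * x₂ * (x₁ + x₂ + 4) - (x₁ + x₂) * w := by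
    apply mul_left_cancel₀ hd
    subst hw
    linear_combination hq₁ - hq₂
  have hc : c = x₁ * x₂ * w := by
    subst hb hw
    linear_combination hq₁
  obtain ⟨p, hp⟩ : ∃ p, p = x₁ + x₂ + 2 := ⟨_, rfl⟩
  obtain ⟨S, hS⟩ : ∃ S, S = x₁ * x₂ + w := ⟨_, rfl⟩
  obtain ⟨D, hD⟩ : ∃ D, D = x₁ * x₂ - w := ⟨_, rfl⟩
  have ha' : a = S - p ^ 2 + 4 := by
    subst hp hS
    linear_combination -hw
  have hb' : b = p * D + 2 * S := by
    subst hp hS hD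
    linear_combination hb
  have hc' : c = (S ^ 2 - D ^ 2) / 4 := by
    subst hS hD
    linear_combination hc
  have hL : pairFactor p S D = 0 := by
    apply mul_left_cancel₀ (pow_ne_zero 3 hd)
    rw [ha', hb', hc'] at hP
    subst hp hS hD
    unfold pairFactor
    linear_combination -60 * hP
  rw [ha', hb', hc']
  have key := congrArg (fun z => z * pairFactor (-p) S (-D) * mixedFactor p S D) hL
  simp only [zero_mul] at key
  rw [← key]
  unfold pairFactor mixedFactor
  ring
end

section
/- Let a, b, c be real numbers, let q(x) = x^4 + 4x^3 + ax^2 + bx + c and let P(x) = (1/6)x^6 + (4/5)x^5 + (a/4)x^4 + (b/3)x^3 + (c/2)x^2 (so that P'(x) = x·q(x)). If x0 is a nonzero real number with q(x0) = 0 and P(x0) = 0, then z(a, b, c) = 0, where z(a,b,c) = 5625a^4c − 1250a^3b^2 − 21600a^3c + 4800a^2b^2 − 120000a^2bc − 60000a^2c^2 + 24000ab^3 + 60000ab^2c + 414720abc + 1036800ac^2 − 10000b^4 − 81920b^3 − 38400b^2c − 384000bc^2 + 160000c^3 − 2985984c^2. In other words, z(a, b, c) ≠ 0 guarantees that the values of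 P at the roots of q are nonzero (i.e., different from the critical value P(0) = 0). -/
/-- Let `q(x) = x⁴ + 4x³ + ax² + bx + c` and
`P(x) = (1/6)x⁶ + (4/5)x⁵ + (a/4)x⁴ + (b/3)x³ + (c/2)x²` (so `P' = x·q`).
If a nonzero real root `x₀` of `q` satisfies `P(x₀) = 0`, then `z(a,b,c) = 0`:
the nonvanishing of `z` guarantees that the values of `P` at the roots of `q`
are nonzero. -/
theorem deg6_zero_critical_value_imp_z_zero (a b c x₀ : ℝ) (hx₀ : x₀ ≠ 0)
    (hq : x₀ ^ 4 + 4 * x₀ ^ 3 + a * x₀ ^ 2 + b * x₀ + c = 0)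
    (hP : 1 / 6 * x₀ ^ 6 + 4 / 5 * x₀ ^ 5 + a / 4 * x₀ ^ 4 + b / 3 * x₀ ^ 3
      + c / 2 * x₀ ^ 2 = 0) :
    5625 * a ^ 4 * c - 1250 * a ^ 3 * b ^ 2 - 21600 * a ^ 3 * c + 4800 * a ^ 2 * b ^ 2
      - 120000 * a ^ 2 * b * c - 60000 * a ^ 2 * c ^ 2 + 24000 * a * b ^ 3
      + 60000 * a * b ^ 2 * c + 414720 * a * b * c + 1036800 * a * c ^ 2 - 10000 * b ^ 4
      - 81920 * b ^ 3 - 38400 * b ^ 2 * c - 384000 * b * c ^ 2 + 160000 * c ^ 3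
      - 2985984 * c ^ 2 = 0 := by
  -- Eliminating `c` between `q(x₀) = 0` and `P(x₀) / x₀² = 0` leaves a multiple of `x₀`.
  have hb : b = -2 * x₀ ^ 3 - 36 / 5 * x₀ ^ 2 - 3 / 2 * a * x₀ := by
    have h : x₀ ^ 3 * (b - (-2 * x₀ ^ 3 - 36 / 5 * x₀ ^ 2 - 3 / 2 * a * x₀)) = 0 := by
      linear_combination 3 * x₀ ^ 2 * hq - 6 * hP
    have := (mul_eq_zero.mp h).resolve_left (pow_ne_zero 3 hx₀)
    linarith
  have hc : c = x₀ ^ 4 + 16 / 5 * x₀ ^ 3 + 1 / 2 * a * x₀ ^ 2 := by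
    linear_combination hq - x₀ * hb
  -- `z` vanishes identically in `a` and `x₀` on this parametrized surface.
  rw [hc, hb]
  ring
end
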